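/- Let p be a prime and R a commutative ring of characteristic p such that F_*R (that is, R viewed as an R-module via r • s = r^p·s) is a finite free R-module. Let c : R → R be a Cartier structure on R with the property that for every additive map φ : R → R satisfying φ(r^p·s) = r·φ(s) there is a unique a ∈ R with φ(s) = c(a·s) for all s ∈ R. Then for all R-modules N and N′, the assignment γ ↦ C_{N′} ∘ γ defines a bijection from the set of R-linear maps N → F*N′ onto the set of additive maps κ : N → N′ satisfying κ(r^p • x) = r • κ(x) for all r ∈ R, x ∈ N. Moreover, for R-linear maps γ : N → F*N and γ′ : N′ → F*N′ and an R-linear map h : N → N′, one has (id_R ⊗ h) ∘ γ = γ′ ∘ h if and only if h ∘ (C_N ∘ γ) = (C_{N′} ∘ γ′) ∘ h. -/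

import Mathlib

open scoped TensorProduct

/-- The base ring for Frobenius base change: `R` itself, as the source of the Frobenius. -/
def FrobBase (_p : ℕ) (R : Type u) : Type u := R

instance (p : ℕ) (R : Type*) [CommRing R] : CommRing (FrobBase p R) :=
  inferInstanceAs (CommRing R)

section Frob

variable (p : ℕ) (R : Type*) [CommRing R] [Fact p.Prime] [CharP R p]

/-- The Frobenius ring endomorphism `r ↦ r ^ p` of `R`. -/
def frobPow : R →+* R where
  toFun r := r ^ p
  map_one' := one_pow p
  map_mul' a b := mul_pow a b p
  map_zero' := zero_pow (Fact.out (p := p.Prime)).ne_zero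
  map_add' a b := add_pow_char a b p

/-- The Frobenius, viewed as a ring homomorphism `FrobBase p R →+* R`. -/
def frobHom : FrobBase p R →+* R := frobPow p R

/-- `FrobBase p R` acts on `R` through the Frobenius:  `a • r = a ^ p * r`. -/
noncomputable instance : Module (FrobBase p R) R := Module.compHom R (frobHom p R)

noncomputable instance : SMulCommClass (FrobBase p R) R R where
  smul_comm a r x := by
    show frobHom p R a * (r * x) = r * (frobHom p R a * x)
    ring

/-- `N`, viewed as a module over `FrobBase p R` via the identity of `R`. -/
def FrobRes (_p : ℕ) (R : Type*) (N : Type u) : Type u := N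

instance (N : Type*) [AddCommGroup N] : AddCommGroup (FrobRes p R N) :=
  inferInstanceAs (AddCommGroup N)

noncomputable instance (N : Type*) [AddCommGroup N] [Module R N] :
    Module (FrobBase p R) (FrobRes p R N) :=
  inferInstanceAs (Module R N)

/-- The identity map `N → FrobRes p R N`. -/
def FrobRes.of {N : Type*} (p : ℕ) (R : Type*) (n : N) : FrobRes p R N := n

/-- The Frobenius pullback `F^*N = R ⊗_{F,R} N`: the base change of `N` along the Frobenius
`F : R → R`, an `R`-module through the left tensor factor, subject to the relation
`(r * a ^ p) ⊗ n = r ⊗ (a • n)`. -/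
noncomputable def FrobPull (N : Type*) [AddCommGroup N] [Module R N] : Type _ :=
  TensorProduct (FrobBase p R) R (FrobRes p R N)

noncomputable instance (N : Type*) [AddCommGroup N] [Module R N] :
    AddCommGroup (FrobPull p R N) :=
  inferInstanceAs (AddCommGroup (TensorProduct (FrobBase p R) R (FrobRes p R N)))

noncomputable instance (N : Type*) [AddCommGroup N] [Module R N] :
    Module R (FrobPull p R N) :=
  inferInstanceAs (Module R (TensorProduct (FrobBase p R) R (FrobRes p R N)))

/-- The elementary tensor `r ⊗ n` in the Frobenius pullback `F^*N`. -/
noncomputable def FrobPull.tmul {N : Type*} [AddCommGroup N] [Module R N] (r : R) (n : N) :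
    FrobPull p R N :=
  r ⊗ₜ[FrobBase p R] (FrobRes.of p R n)

/-- `F_* R`: the ring `R` viewed as an `R`-module via `r • s = r ^ p * s`. -/
def FrobPush (_p : ℕ) (R : Type u) : Type u := R

instance : AddCommGroup (FrobPush p R) := inferInstanceAs (AddCommGroup R)

noncomputable instance : Module R (FrobPush p R) := Module.compHom R (frobPow p R)

/-- The identity map `R → F_* R`. -/
def FrobPush.of : R → FrobPush p R := fun r => r

/-- The identity map `F_* R → R`. -/
def FrobPush.un : FrobPush p R → R := fun r => r

noncomputable instance (N : Type*) [AddCommGroup N] [Module R N] :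
    Module (FrobBase p R) (FrobPull p R N) :=
  inferInstanceAs (Module (FrobBase p R) (TensorProduct (FrobBase p R) R (FrobRes p R N)))

/-- An `R`-linear map `h : N → N'`, viewed as `FrobBase p R`-linear between the restrictions. -/
noncomputable def FrobRes.map {N N' : Type*} [AddCommGroup N] [Module R N]
    [AddCommGroup N'] [Module R N'] (h : N →ₗ[R] N') :
    FrobRes p R N →ₗ[FrobBase p R] FrobRes p R N' where
  toFun n := FrobRes.of p R (h (n : N))
  map_add' x y := h.map_add x y
  map_smul' a x := h.map_smul (a : R) x

/-- Functoriality of the Frobenius pullback: `id_R ⊗ h : F^*N → F^*N'`. -/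
noncomputable def FrobPull.map {N N' : Type*} [AddCommGroup N] [Module R N]
    [AddCommGroup N'] [Module R N'] (h : N →ₗ[R] N') :
    FrobPull p R N →ₗ[FrobBase p R] FrobPull p R N' :=
  TensorProduct.map LinearMap.id (FrobRes.map p R h)

/-!
A finite generating family `e` of `F_* R` with coordinate functionals `φ` gives, through
`φ i = c (f i * ·)`, two families `e`, `f` with `s = ∑ i, c (f i * s) ^ p * e i` for all `s`. This
relation is symmetric in `e` and `f`. Read in `F^*N` it becomes `t = ∑ i, e i ⊗ C_N (f i • t)`, so
`t` is determined by the function `s ↦ C_N (s • t)`; read in `N` it shows that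
`x ↦ ∑ i, e i ⊗ κ (f i • x)` is the linear map corresponding to `κ`.
-/

section CartierMaps

/-- A Cartier map between `R`-modules is an additive map `κ` with `κ (r ^ p • x) = r • κ x`; a
Cartier structure on `M` is the case `N = M`. Additivity is carried by the type of `κ`. -/
def IsCartier (p : ℕ) (R : Type*) {M N : Type*} [Semiring R] [AddCommMonoid M] [Module R M]
    [AddCommMonoid N] [Module R N] (κ : M →+ N) : Prop :=
  ∀ (r : R) (x : M), κ (r ^ p • x) = r • κ x

/-- The families `e` and `f` are dual with respect to `c`: when `c` is a Cartier structure on `R`,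
this says that the functionals `c (f i * ·)` are coordinates on `F_* R` for the generators `e`.
Linear independence of `e` is not required, so that this makes sense for projective `F_* R`. -/
def IsDualPair (p : ℕ) {R ι : Type*} [CommSemiring R] [Fintype ι] (c : R →+ R)
    (e f : ι → R) : Prop :=
  ∀ s, ∑ i, c (f i * s) ^ p * e i = s

variable {p : ℕ} {R ι : Type*} [CommSemiring R] [Fintype ι] {c : R →+ R} {e f : ι → R}

theorem IsCartier.map_pow_mul (hc : IsCartier p R c) (r s : R) : c (r ^ p * s) = r * c s :=
  hc r s

namespace IsDualPair

theorem eq_of_forall_mul_eq (hef : IsDualPair p c e f) {s s' : R}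
    (h : ∀ t, c (t * s) = c (t * s')) : s = s' := by
  rw [← hef s, ← hef s']
  simp only [h]

theorem sum_mul_eq (hef : IsDualPair p c e f) (hc : IsCartier p R c) (s t : R) :
    ∑ i, c (e i * s) * c (f i * t) = c (t * s) := by
  calc ∑ i, c (e i * s) * c (f i * t)
      = ∑ i, c (c (f i * t) ^ p * (e i * s)) :=
        Finset.sum_congr rfl fun i _ => by rw [hc.map_pow_mul, mul_comm]
    _ = c ((∑ i, c (f i * t) ^ p * e i) * s) := by simp only [Finset.sum_mul, map_sum, mul_assoc]
    _ = c (t * s) := by rw [hef t]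

theorem symm (hef : IsDualPair p c e f) (hc : IsCartier p R c) : IsDualPair p c f e := by
  refine fun s => hef.eq_of_forall_mul_eq fun t => ?_
  calc c (t * ∑ i, c (e i * s) ^ p * f i)
      = ∑ i, c (e i * s) * c (f i * t) := by
        rw [mul_comm t, Finset.sum_mul, map_sum]
        simp only [mul_assoc, hc.map_pow_mul]
    _ = c (t * s) := hef.sum_mul_eq hc s t

end IsDualPair

end CartierMaps

theorem exists_isDualPair [Module.Finite R (FrobPush p R)] [Module.Projective R (FrobPush p R)]
    {c : R →+ R} (hgen : ∀ φ : R →+ R, IsCartier p R φ → ∃ a, ∀ s, φ s = c (a * s)) :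
    ∃ (n : ℕ) (e f : Fin n → R), IsDualPair p c e f := by
  obtain ⟨n, π, σ, -, -, hπσ⟩ := Module.Finite.exists_comp_eq_id_of_projective R (FrobPush p R)
  let φ (i : Fin n) : R →+ R := ((LinearMap.proj i).comp σ).toAddMonoidHom
  have hφ (i : Fin n) : IsCartier p R (φ i) := ((LinearMap.proj i).comp σ).map_smul
  choose f hf using fun i => hgen (φ i) (hφ i)
  refine ⟨n, fun i => FrobPush.un p R (π (Pi.single i 1)), f, fun s => ?_⟩
  have hs : ∑ i, σ (FrobPush.of p R s) i • π (Pi.single i 1) = FrobPush.of p R s := by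
    simp only [← map_smul, ← map_sum, ← pi_eq_sum_univ']
    exact LinearMap.congr_fun hπσ (FrobPush.of p R s)
  simp only [← hf]
  exact hs

namespace FrobPull

variable {p R} {N : Type*} [AddCommGroup N] [Module R N]

@[elab_as_elim]
theorem induction_on {motive : FrobPull p R N → Prop} (t : FrobPull p R N) (zero : motive 0)
    (tmul : ∀ r n, motive (tmul p R r n))
    (add : ∀ x y, motive x → motive y → motive (x + y)) : motive t :=
  TensorProduct.induction_on t zero tmul add

theorem tmul_zero (r : R) : tmul p R r (0 : N) = 0 :=
  TensorProduct.tmul_zero (R := FrobBase p R) (FrobRes p R N) r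

theorem tmul_add (r : R) (m n : N) : tmul p R r (m + n) = tmul p R r m + tmul p R r n :=
  TensorProduct.tmul_add (R := FrobBase p R) r (FrobRes.of p R m) (FrobRes.of p R n)

theorem sum_tmul {ι : Type*} (s : Finset ι) (r : ι → R) (n : N) :
    tmul p R (∑ i ∈ s, r i) n = ∑ i ∈ s, tmul p R (r i) n :=
  TensorProduct.sum_tmul (R := FrobBase p R) s r (FrobRes.of p R n)

theorem smul_tmul (r s : R) (n : N) : r • tmul p R s n = tmul p R (r * s) n :=
  TensorProduct.smul_tmul' (R := FrobBase p R) r s (FrobRes.of p R n)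

theorem tmul_smul (r a : R) (n : N) : tmul p R r (a • n) = tmul p R (a ^ p * r) n :=
  (TensorProduct.smul_tmul (R := FrobBase p R) (R' := FrobBase p R) (a : FrobBase p R) r
    (FrobRes.of p R n)).symm

theorem addHom_ext {A : Type*} [AddCommMonoid A] {F G : FrobPull p R N →+ A}
    (h : ∀ r n, F (tmul p R r n) = G (tmul p R r n)) : F = G :=
  AddMonoidHom.ext fun t => induction_on t (by simp only [map_zero]) h
    fun x y hx hy => by rw [map_add, map_add, hx, hy]

section Map

variable {N' : Type*} [AddCommGroup N'] [Module R N']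

theorem map_tmul (h : N →ₗ[R] N') (r : R) (n : N) :
    map p R h (tmul p R r n) = tmul p R r (h n) :=
  TensorProduct.map_tmul (R := FrobBase p R) _ _ _ _

theorem map_smul (h : N →ₗ[R] N') (r : R) (t : FrobPull p R N) :
    map p R h (r • t) = r • map p R h t := by
  induction t using induction_on with
  | zero => simp only [smul_zero, map_zero]
  | tmul s n => simp only [smul_tmul, map_tmul]
  | add x y hx hy => rw [smul_add, map_add, map_add, smul_add, hx, hy]

end Map

section Contraction

variable {c : R →+ R}

/-- The contraction `C_N : F^*N → N`, `r ⊗ n ↦ c r • n`, of a Cartier structure `c` on `R`. -/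
noncomputable def contraction (hc : IsCartier p R c) : FrobPull p R N →+ N :=
  TensorProduct.liftAddHom (R := FrobBase p R) (M := R) (N := FrobRes p R N)
    ((smulAddHom R N).comp c) fun a r n => by
      change c ((show R from a) ^ p * r) • (show N from n) = c r • (show R from a) • (show N from n)
      rw [hc.map_pow_mul, mul_comm, mul_smul]

theorem contraction_tmul (hc : IsCartier p R c) (r : R) (n : N) :
    contraction hc (tmul p R r n) = c r • n :=
  TensorProduct.liftAddHom_tmul ..

theorem eq_contraction (hc : IsCartier p R c) {C : FrobPull p R N → N}
    (hadd : ∀ x y, C (x + y) = C x + C y) (htmul : ∀ r n, C (tmul p R r n) = c r • n) :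
    C = contraction hc := by
  have : AddMonoidHom.mk' C hadd = contraction hc :=
    addHom_ext fun r n => (htmul r n).trans (contraction_tmul hc r n).symm
  exact congrArg DFunLike.coe this

theorem isCartier_contraction (hc : IsCartier p R c) :
    IsCartier p R (contraction hc : FrobPull p R N →+ N) := by
  intro r t
  induction t using induction_on with
  | zero => simp only [smul_zero, map_zero]
  | tmul s n => rw [smul_tmul, contraction_tmul, contraction_tmul, hc.map_pow_mul, mul_smul]
  | add x y hx hy => rw [smul_add, map_add, map_add, smul_add, hx, hy]

theorem contraction_map {N' : Type*} [AddCommGroup N'] [Module R N'] (hc : IsCartier p R c)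
    (h : N →ₗ[R] N') (t : FrobPull p R N) :
    contraction hc (map p R h t) = h (contraction hc t) := by
  induction t using induction_on with
  | zero => simp only [map_zero]
  | tmul r n => rw [map_tmul, contraction_tmul, contraction_tmul, h.map_smul]
  | add x y hx hy => rw [map_add, map_add, map_add, map_add, hx, hy]

end Contraction

section DualPair

variable {c : R →+ R} {ι : Type*} [Fintype ι] {e f : ι → R}

theorem sum_tmul_contraction (hc : IsCartier p R c) (hef : IsDualPair p c e f)
    (t : FrobPull p R N) : ∑ i, tmul p R (e i) (contraction hc (f i • t)) = t := by
  induction t using induction_on with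
  | zero => simp only [smul_zero, map_zero, tmul_zero, Finset.sum_const_zero]
  | tmul s n =>
    simp only [smul_tmul, contraction_tmul, tmul_smul]
    rw [← sum_tmul, hef s]
  | add x y hx hy => simp only [smul_add, map_add, tmul_add, Finset.sum_add_distrib, hx, hy]

theorem eq_of_forall_contraction_smul_eq (hc : IsCartier p R c) (hef : IsDualPair p c e f)
    {t t' : FrobPull p R N} (h : ∀ s : R, contraction hc (s • t) = contraction hc (s • t')) :
    t = t' := by
  rw [← sum_tmul_contraction hc hef t, ← sum_tmul_contraction hc hef t']
  simp only [h]

variable {M : Type*} [AddCommMonoid M] [Module R M]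

theorem linearMap_ext (hc : IsCartier p R c) (hef : IsDualPair p c e f)
    {γ δ : M →ₗ[R] FrobPull p R N} (h : ∀ x, contraction hc (γ x) = contraction hc (δ x)) :
    γ = δ :=
  LinearMap.ext fun x => eq_of_forall_contraction_smul_eq hc hef fun s => by
    rw [← γ.map_smul, ← δ.map_smul, h]

theorem contraction_smul_sum_tmul (hc : IsCartier p R c) (hef : IsDualPair p c e f)
    {κ : M →+ N} (hκ : IsCartier p R κ) (s : R) (x : M) :
    contraction hc (s • ∑ i, tmul p R (e i) (κ (f i • x))) = κ (s • x) := by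
  calc contraction hc (s • ∑ i, tmul p R (e i) (κ (f i • x)))
      = ∑ i, c (e i * s) • κ (f i • x) := by
        simp only [Finset.smul_sum, map_sum, smul_tmul, contraction_tmul, mul_comm s]
    _ = κ ((∑ i, c (e i * s) ^ p * f i) • x) := by
        simp only [Finset.sum_smul, map_sum, mul_smul, hκ _ _]
    _ = κ (s • x) := by rw [hef.symm hc s]

/-- The linear map `γ : M → F^*N` with `C_N ∘ γ = κ` attached to a Cartier map `κ`, written in terms
of a dual pair, on which it does not depend. -/
noncomputable def ofCartier (hc : IsCartier p R c) (hef : IsDualPair p c e f) {κ : M →+ N}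
    (hκ : IsCartier p R κ) : M →ₗ[R] FrobPull p R N where
  toFun x := ∑ i, tmul p R (e i) (κ (f i • x))
  map_add' x y := by simp only [smul_add, map_add, tmul_add, Finset.sum_add_distrib]
  map_smul' r x := eq_of_forall_contraction_smul_eq hc hef fun s => by
    rw [RingHom.id_apply, smul_smul, contraction_smul_sum_tmul hc hef hκ,
      contraction_smul_sum_tmul hc hef hκ, smul_smul]

theorem contraction_ofCartier (hc : IsCartier p R c) (hef : IsDualPair p c e f) {κ : M →+ N}
    (hκ : IsCartier p R κ) (x : M) : contraction hc (ofCartier hc hef hκ x) = κ x := by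
  have h := contraction_smul_sum_tmul hc hef hκ 1 x
  rwa [one_smul, one_smul] at h

theorem existsUnique_contraction_comp_eq (hc : IsCartier p R c) (hef : IsDualPair p c e f)
    {κ : M →+ N} (hκ : IsCartier p R κ) :
    ∃! γ : M →ₗ[R] FrobPull p R N, ∀ x, contraction hc (γ x) = κ x :=
  ⟨ofCartier hc hef hκ, contraction_ofCartier hc hef hκ, fun _ hδ =>
    linearMap_ext hc hef fun x => (hδ x).trans (contraction_ofCartier hc hef hκ x).symm⟩

theorem map_comp_eq_iff {M' N' : Type*} [AddCommMonoid M'] [Module R M'] [AddCommGroup N']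
    [Module R N'] (hc : IsCartier p R c) (hef : IsDualPair p c e f) (γ : M →ₗ[R] FrobPull p R N)
    (γ' : M' →ₗ[R] FrobPull p R N') (g : M →ₗ[R] M') (h : N →ₗ[R] N') :
    (∀ x, map p R h (γ x) = γ' (g x)) ↔
      ∀ x, h (contraction hc (γ x)) = contraction hc (γ' (g x)) := by
  let mapγ : M →ₗ[R] FrobPull p R N' :=
    { toFun x := map p R h (γ x)
      map_add' x y := by rw [γ.map_add, map_add]
      map_smul' r x := by rw [γ.map_smul, map_smul, RingHom.id_apply] }
  simp only [← contraction_map]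
  exact ⟨fun H x => congrArg _ (H x), fun H =>
    LinearMap.congr_fun (linearMap_ext hc hef (γ := mapγ) (δ := γ'.comp g) H)⟩

end DualPair

end FrobPull

theorem cartier_gamma_equivalence_general
    (p : ℕ) [Fact p.Prime] (R : Type*) [CommRing R] [CharP R p]
    [Module.Finite R (FrobPush p R)] [Module.Projective R (FrobPush p R)]
    (c : R → R) (hcadd : ∀ x y : R, c (x + y) = c x + c y)
    (hcsemi : ∀ r s : R, c (r ^ p * s) = r * c s)
    (hcgen : ∀ φ : R → R, (∀ x y, φ (x + y) = φ x + φ y) → (∀ r s, φ (r ^ p * s) = r * φ s) →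
      ∃ a : R, ∀ s, φ s = c (a * s))
    (N N' : Type*) [AddCommGroup N] [Module R N] [AddCommGroup N'] [Module R N']
    (C : FrobPull p R N → N) (hCadd : ∀ x y, C (x + y) = C x + C y)
    (hC : ∀ (r : R) (n : N), C (FrobPull.tmul p R r n) = c r • n)
    (C' : FrobPull p R N' → N') (hC'add : ∀ x y, C' (x + y) = C' x + C' y)
    (hC' : ∀ (r : R) (n : N'), C' (FrobPull.tmul p R r n) = c r • n) :
    ((∀ γ : N →ₗ[R] FrobPull p R N', ∀ (r : R) (x : N), C' (γ (r ^ p • x)) = r • C' (γ x)) ∧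
     (∀ κ : N → N', (∀ x y, κ (x + y) = κ x + κ y) →
        (∀ (r : R) (x : N), κ (r ^ p • x) = r • κ x) →
        ∃! γ : N →ₗ[R] FrobPull p R N', ∀ x, C' (γ x) = κ x)) ∧
    (∀ (γ : N →ₗ[R] FrobPull p R N) (γ' : N' →ₗ[R] FrobPull p R N') (h : N →ₗ[R] N'),
      (∀ x, FrobPull.map p R h (γ x) = γ' (h x)) ↔ (∀ x, h (C (γ x)) = C' (γ' (h x)))) := by
  obtain ⟨c, rfl⟩ : ∃ c' : R →+ R, ⇑c' = c := ⟨.mk' c hcadd, rfl⟩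
  have hc : IsCartier p R c := hcsemi
  obtain ⟨n, e, f, hef⟩ := exists_isDualPair p R fun φ hφ => hcgen φ φ.map_add hφ
  obtain rfl := FrobPull.eq_contraction hc hCadd hC
  obtain rfl := FrobPull.eq_contraction hc hC'add hC'
  refine ⟨⟨fun γ r x => ?_, fun κ hκadd hκ => ?_⟩, fun γ γ' h => ?_⟩
  · rw [γ.map_smul, FrobPull.isCartier_contraction hc]
  · exact FrobPull.existsUnique_contraction_comp_eq hc hef (κ := .mk' κ hκadd) hκ
  · exact FrobPull.map_comp_eq_iff hc hef γ γ' h h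

/-- Let `R` be a commutative ring of prime characteristic `p` such that `F_* R` is finite free
over `R`, and let `c` be a Cartier structure on `R` such that every Frobenius-contracting
additive map `φ : R → R` equals `c (a * ·)` for a unique `a`.  Then for all `R`-modules
`N, N'`, composition with the contraction `C_{N'} : F^*N' → N'` is a bijection from the
`R`-linear maps `N → F^*N'` onto the Frobenius-contracting additive maps `N → N'`; moreover
for `γ : N → F^*N`, `γ' : N' → F^*N'` linear and `h : N → N'` linear one has
`(id ⊗ h) ∘ γ = γ' ∘ h` iff `h ∘ (C_N ∘ γ) = (C_{N'} ∘ γ') ∘ h`. -/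
theorem cartier_gamma_equivalence
    (p : ℕ) [Fact p.Prime] (R : Type*) [CommRing R] [CharP R p]
    [Module.Finite R (FrobPush p R)] [Module.Free R (FrobPush p R)]
    (c : R → R) (hcadd : ∀ x y : R, c (x + y) = c x + c y)
    (hcsemi : ∀ r s : R, c (r ^ p * s) = r * c s)
    (hcgen : ∀ φ : R → R, (∀ x y, φ (x + y) = φ x + φ y) → (∀ r s, φ (r ^ p * s) = r * φ s) →
      ∃! a : R, ∀ s, φ s = c (a * s))
    (N N' : Type*) [AddCommGroup N] [Module R N] [AddCommGroup N'] [Module R N']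
    (C : FrobPull p R N → N) (hCadd : ∀ x y, C (x + y) = C x + C y)
    (hC : ∀ (r : R) (n : N), C (FrobPull.tmul p R r n) = c r • n)
    (C' : FrobPull p R N' → N') (hC'add : ∀ x y, C' (x + y) = C' x + C' y)
    (hC' : ∀ (r : R) (n : N'), C' (FrobPull.tmul p R r n) = c r • n) :
    ((∀ γ : N →ₗ[R] FrobPull p R N', ∀ (r : R) (x : N), C' (γ (r ^ p • x)) = r • C' (γ x)) ∧
     (∀ κ : N → N', (∀ x y, κ (x + y) = κ x + κ y) →
        (∀ (r : R) (x : N), κ (r ^ p • x) = r • κ x) →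
        ∃! γ : N →ₗ[R] FrobPull p R N', ∀ x, C' (γ x) = κ x)) ∧
    (∀ (γ : N →ₗ[R] FrobPull p R N) (γ' : N' →ₗ[R] FrobPull p R N') (h : N →ₗ[R] N'),
      (∀ x, FrobPull.map p R h (γ x) = γ' (h x)) ↔ (∀ x, h (C (γ x)) = C' (γ' (h x)))) :=
  cartier_gamma_equivalence_general p R c hcadd hcsemi
    (fun φ hadd hsemi => (hcgen φ hadd hsemi).exists) N N' C hCadd hC C' hC'add hC'

end Frob
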